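/- arXiv:2110.06768 — 3 statements merged into one kernel-verified Lean document; each statement's English description precedes it below -/
import Mathlib

section
/- Let r be an integer and l a positive integer such that 24 | r(l−1). Then for every positive divisor d of l, 24 | r(d²−1). -/
/-!
Write `l = d * k`. By coprimality of `8` and `3` it suffices to treat the moduli `8` and `3`
separately. For `n ∈ {8, 3}`, the relation `r * d * k = r` in `ZMod n` says that `d` is
invertible modulo `n / gcd (n, r)`, and every unit modulo a divisor of `24` squares to `1`,
so `r * (d ^ 2 - 1) = 0`. Both cases are finite checks in `ZMod n`.
-/

theorem zmod_eight_mul_sq_sub_one :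
    ∀ r d k : ZMod 8, r * (d * k - 1) = 0 → r * (d ^ 2 - 1) = 0 := by
  decide

theorem zmod_three_mul_sq_sub_one :
    ∀ r d k : ZMod 3, r * (d * k - 1) = 0 → r * (d ^ 2 - 1) = 0 := by
  decide

theorem dvd_24_of_dvd_sq_sub_one (r l : ℤ) (hl : 0 < l) (h : (24 : ℤ) ∣ r * (l - 1)) :
    ∀ d : ℤ, 0 < d → d ∣ l → (24 : ℤ) ∣ r * (d ^ 2 - 1) := by
  rintro d - ⟨k, rfl⟩
  have h8 : ((8 : ℕ) : ℤ) ∣ r * (d ^ 2 - 1) := by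
    have h' : ((8 : ℕ) : ℤ) ∣ r * (d * k - 1) := dvd_trans (by norm_num) h
    rw [← ZMod.intCast_zmod_eq_zero_iff_dvd] at h' ⊢
    push_cast at h' ⊢
    exact zmod_eight_mul_sq_sub_one _ _ _ h'
  have h3 : ((3 : ℕ) : ℤ) ∣ r * (d ^ 2 - 1) := by
    have h' : ((3 : ℕ) : ℤ) ∣ r * (d * k - 1) := dvd_trans (by norm_num) h
    rw [← ZMod.intCast_zmod_eq_zero_iff_dvd] at h' ⊢
    push_cast at h' ⊢
    exact zmod_three_mul_sq_sub_one _ _ _ h'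
  omega
end

section
/- Let m be a positive odd integer, t an integer, and u the number of primes p ≡ 3 (mod 4) dividing rad_O(m). If irad(m) ∤ t, then ∑_{b=0}^{m−1} (b|m)·e(tb/m) = 0. If irad(m) | t, then ∑_{b=0}^{m−1} (b|m)·e(tb/m) = i^{u²} · (m/√(rad′(m))) · ((t/irad′(m)) | rad_O(m)) · ∏_{p | rad_E(m)} (p − 1 − p·((t/irad(m)) | p)²). -/
set_option maxHeartbeats 1000000
set_option synthInstance.maxHeartbeats 200000

noncomputable section

open Complex UpperHalfPlane

namespace Paper

/-- `e2 z = e^{2πiz}`. -/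
def e2 (z : ℂ) : ℂ := Complex.exp (2 * Real.pi * Complex.I * z)

/-- `e^{2πix}` for rational `x` -/
def eQ (x : ℚ) : ℂ := e2 (x : ℂ)

open scoped Classical in
/-- Kronecker–Jacobi symbol at a prime (including `p = 2`) -/
def kronP (m : ℤ) (p : ℕ) : ℤ :=
  if p = 2 then (if 2 ∣ m then 0 else if m % 8 = 1 ∨ m % 8 = 7 then 1 else -1)
  else if hp : p.Prime then @legendreSym p ⟨hp⟩ m else 0

open scoped Classical in
/-- the Kronecker–Jacobi symbol `(m | n)`, extended to all integers `n` -/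
def kron (m n : ℤ) : ℤ :=
  if n = 0 then (if m = 1 ∨ m = -1 then 1 else 0)
  else (if n < 0 ∧ m < 0 then -1 else 1) *
    (n.natAbs.factorization.prod fun p e => kronP m p ^ e)

/-- product of primes appearing to an even power in `m` -/
def radE (m : ℕ) : ℕ := ∏ p ∈ m.primeFactors.filter (fun p => Even (m.factorization p)), p

/-- product of primes appearing to an odd power in `m` -/
def radO (m : ℕ) : ℕ := ∏ p ∈ m.primeFactors.filter (fun p => Odd (m.factorization p)), p

def rad (m : ℕ) : ℕ := radE m * radO m

def radP (m : ℕ) : ℕ := radE m ^ 2 * radO m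

def irad (m : ℕ) : ℕ := m / rad m

def iradP (m : ℕ) : ℕ := m / radP m

/-- the Dedekind eta function (as a total function on `ℂ`; the defining product
converges on the upper half plane) -/
def dedekindEta (z : ℂ) : ℂ := e2 (z / 24) * ∏' n : ℕ, (1 - e2 ((n + 1) * z))

/-- `P` records the Fourier coefficients of `η^r`:
`η^r(τ) = q^{r/24} ∑_{n ≥ 0} P(n) qⁿ`, with `P` vanishing off nonnegative integers. -/
def IsEtaPowerCoeffs (r : ℤ) (P : ℚ → ℂ) : Prop :=
  (∀ x : ℚ, (¬ ∃ n : ℕ, x = n) → P x = 0) ∧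
    ∀ τ : ℍ, HasSum (fun n : ℕ => P n * e2 (((r : ℂ) / 24 + n) * τ)) (dedekindEta τ ^ r)

end Paper

/-!
STATEMENT 16: Let m be a positive odd integer, t an integer, and u the number of primes
p ≡ 3 (mod 4) dividing rad_O(m).  If irad(m) ∤ t then ∑_{b=0}^{m−1} (b|m)·e(tb/m) = 0.
If irad(m) | t then
∑_{b=0}^{m−1} (b|m)·e(tb/m) = i^{u²}·(m/√(rad′(m)))·((t/irad′(m)) | rad_O(m))
  ·∏_{p | rad_E(m)} (p − 1 − p·((t/irad(m)) | p)²).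
-/

/-!
Write `(b|m) = (b|rad_E m)² (b|rad_O m)`. This is periodic in `b` modulo `rad m`, so writing
`b = x + rad(m) c` with `0 ≤ c < irad(m)`, the sum over `c` is a complete sum of additive characters
modulo `irad m`: it is `irad m` if `irad m ∣ t` and `0` otherwise (`jacobi_rad`, `sum_inflate`).
When `t = irad(m) s`, what remains is a sum modulo the squarefree number `rad m = rad_E m * rad_O m`,
which the Chinese remainder theorem splits (`twisted_mul`) into

* a Ramanujan sum `∑ (b|E)² e(sb/E) = ∏_{p ∣ E} (p - 1 - p (s|p)²)` (`ramanujan_squarefree`), and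
* a Gauss sum `∑ (b|O) e(sb/O) = (s|O) ε_O √O` (`gauss_squarefree`), where `ε_n` is `1` or `i`
  according as `n ≡ 1` or `3` modulo `4`.

The splitting leaves a factor `(E|O)`, which turns `(s|O)` into `(E s|O) = (t/irad′(m) | O)`; and
`ε_O = i^{u²}` because `O ≡ (-1)^u` modulo `4` (`eps_eq_I_pow`).

For the Gauss sum, quadratic reciprocity in the form `(a|b)(b|a) ε_a ε_b = ε_{ab}` reduces to prime
modulus, and there to `∑_x e(x²/p) = ε_p √p` by counting square roots. The determination of this
sign is the analytic part (`quadratic_sum`): Poisson summation is applied to the theta series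
`∑_k e(k²/n) exp(-π k²/(y n²))` in two ways, once after splitting `k` into classes modulo `n`, and
once after the inversion `τ ↦ -1/τ`, where the dual series has coefficients of period `2`. Comparing
the two as `y → ∞` gives `∑_{a mod n} e(a²/n) = √n (1+i)/2 (1 + (-i)^n)`.
-/

namespace GaussEval
open Filter Topology

/-! ### Theta series and their behaviour near a cusp -/

lemma summable_gaussian (w : ℂ) (hw : 0 < w.re) (z : ℂ) :
    Summable fun k : ℤ => cexp (-Real.pi * w * (k : ℂ) ^ 2 + 2 * Real.pi * z * k) := by
  have h := (summable_jacobiTheta₂_term_iff (-Complex.I * z) (Complex.I * w)).2 (by simpa using hw)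
  refine h.congr fun k => ?_
  rw [jacobiTheta₂_term]
  congr 1
  linear_combination (-2 * Real.pi * z * k + Real.pi * w * k ^ 2) * I_mul_I

/-- The theta series `∑ₖ exp(-π A k²) e^{-2πi a k / N}`, which Poisson summation attaches to the
Gaussian series over the residue class of `a` modulo `N`. -/
def dualTheta (N : ℕ) (a : ℤ) (A : ℂ) : ℂ :=
  ∑' k : ℤ, cexp (-Real.pi * A * (k : ℂ) ^ 2 + 2 * Real.pi * (-Complex.I * (a / N)) * k)

/-- Only the term `k = 0` survives as `Re A → ∞`; the series with `A = 1` dominates. -/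
lemma tendsto_dualTheta {ι : Type*} {l : Filter ι} {A : ι → ℂ}
    (hA : Tendsto (fun i => (A i).re) l atTop) (N : ℕ) (a : ℤ) :
    Tendsto (fun i => dualTheta N a (A i)) l (𝓝 1) := by
  have hs : Summable fun k : ℤ => ‖cexp (-Real.pi * 1 * (k : ℂ) ^ 2 + 2 * Real.pi * 0 * k)‖ :=
    (summable_gaussian 1 (by simp) 0).norm
  have hnorm : ∀ (B : ℂ) (k : ℤ),
      ‖cexp (-Real.pi * B * (k : ℂ) ^ 2 + 2 * Real.pi * (-Complex.I * (a / N)) * k)‖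
        = Real.exp (-Real.pi * B.re * (k : ℝ) ^ 2) := by
    intro B k
    rw [Complex.norm_exp]
    congr 1
    have e : (-Real.pi * B * (k : ℂ) ^ 2 + 2 * Real.pi * (-Complex.I * (a / N)) * k)
        = ((-Real.pi * (k : ℝ) ^ 2 : ℝ) : ℂ) * B
          + ((-2 * Real.pi * ((a : ℝ) / N) * k : ℝ) : ℂ) * Complex.I := by
      push_cast; ring
    rw [e, add_re, re_ofReal_mul, re_ofReal_mul, Complex.I_re]
    ring
  have key : Tendsto (fun i => dualTheta N a (A i)) l
      (𝓝 (∑' k : ℤ, if k = 0 then (1 : ℂ) else 0)) := by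
    refine tendsto_tsum_of_dominated_convergence hs ?_ ?_
    · intro k
      split_ifs with hk
      · subst hk; simpa using tendsto_const_nhds
      · rw [tendsto_zero_iff_norm_tendsto_zero]
        simp only [hnorm]
        refine Real.tendsto_exp_atBot.comp ?_
        have hc : -Real.pi * (k : ℝ) ^ 2 < 0 := by
          have : 0 < (k : ℝ) ^ 2 := by positivity
          nlinarith [Real.pi_pos]
        refine (hA.const_mul_atTop_of_neg hc).congr fun i => ?_
        ring
    · filter_upwards [hA.eventually_ge_atTop 1] with i hi k
      have e : cexp (-Real.pi * 1 * (k : ℂ) ^ 2 + 2 * Real.pi * 0 * k)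
          = ((Real.exp (-Real.pi * (k : ℝ) ^ 2) : ℝ) : ℂ) := by
        push_cast; congr 1; ring
      rw [hnorm, e, norm_real, Real.norm_of_nonneg (Real.exp_pos _).le]
      apply Real.exp_le_exp.2
      nlinarith [mul_nonneg Real.pi_pos.le (mul_nonneg (sq_nonneg (k : ℝ)) (sub_nonneg.2 hi))]
  simpa using key

/-- Poisson summation for a Gaussian series over one residue class modulo `N`. -/
lemma tsum_class (N : ℕ) (hN : N ≠ 0) (a : ℤ) (A : ℂ) (hA : 0 < A.re) :
    ∑' j : ℤ, cexp (-Real.pi * (1 / (A * N ^ 2)) * ((j * N + a : ℤ) : ℂ) ^ 2)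
      = A ^ (1 / 2 : ℂ) * dualTheta N a A := by
  have hA0 : A ≠ 0 := by rintro rfl; simp at hA
  have hN' : (N : ℂ) ≠ 0 := by exact_mod_cast hN
  have h0 : A ^ (1 / 2 : ℂ) ≠ 0 := by simp [cpow_eq_zero_iff, hA0]
  rw [dualTheta, Complex.tsum_exp_neg_quadratic hA, ← mul_assoc, mul_one_div_cancel h0, one_mul]
  refine tsum_congr fun j => ?_
  congr 1
  have : (j : ℂ) + Complex.I * (-Complex.I * (a / N)) = (j * N + a) / N := by
    field_simp
    linear_combination (-(a : ℂ)) * Complex.I_sq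
  rw [this]
  push_cast
  field_simp

/-- Splitting a Gaussian series with periodic coefficients into residue classes. -/
lemma tsum_periodic (N : ℕ) [NeZero N] (c : ℤ → ℂ) (hc : ∀ j a, c (j * N + a) = c a)
    (A : ℂ) (hA : 0 < A.re) (hw : 0 < (1 / (A * N ^ 2)).re) :
    ∑' k : ℤ, c k * cexp (-Real.pi * (1 / (A * N ^ 2)) * (k : ℂ) ^ 2)
      = A ^ (1 / 2 : ℂ) * ∑ a : Fin N, c (a : ℕ) * dualTheta N (a : ℕ) A := by
  have hs := (summable_gaussian _ hw 0)
  simp only [mul_zero, zero_mul, add_zero] at hs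
  have hs' := ((Int.divModEquiv N).symm.summable_iff).2 hs
  have hcf : ∀ x : ℤ × Fin N, c ((Int.divModEquiv N).symm x) = c ((x.2 : ℕ) : ℤ) := by
    intro x
    exact hc _ _
  have hF : Summable fun x : ℤ × Fin N => c ((x.2 : ℕ) : ℤ) *
      cexp (-Real.pi * (1 / (A * N ^ 2)) * ((x.1 * N + (x.2 : ℕ) : ℤ) : ℂ) ^ 2) := by
    refine Summable.of_norm_bounded (hs'.norm.mul_left (∑ a : Fin N, ‖c ((a : ℕ) : ℤ)‖)) ?_
    intro x
    rw [norm_mul]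
    exact mul_le_mul_of_nonneg_right
      (Finset.single_le_sum (f := fun a : Fin N => ‖c ((a : ℕ) : ℤ)‖)
        (fun _ _ => norm_nonneg _) (Finset.mem_univ x.2)) (norm_nonneg _)
  rw [← (Int.divModEquiv N).symm.tsum_eq, Finset.mul_sum]
  calc _ = ∑' x : ℤ × Fin N, c ((x.2 : ℕ) : ℤ) *
      cexp (-Real.pi * (1 / (A * N ^ 2)) * ((x.1 * N + (x.2 : ℕ) : ℤ) : ℂ) ^ 2) :=
        tsum_congr fun x => by rw [hcf]; rfl
    _ = ∑' x : Fin N × ℤ, c ((x.1 : ℕ) : ℤ) *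
      cexp (-Real.pi * (1 / (A * N ^ 2)) * ((x.2 * N + (x.1 : ℕ) : ℤ) : ℂ) ^ 2) :=
        ((Equiv.prodComm _ _).tsum_eq _).symm
    _ = _ := by
      refine hF.prod_symm.tsum_prod.trans ?_
      rw [tsum_fintype]
      refine Finset.sum_congr rfl fun a _ => ?_
      dsimp only [Prod.swap]
      rw [tsum_mul_left, tsum_class N (NeZero.ne N) _ A hA]
      ring

lemma cpow_half_eq {z A : ℂ} (h : z ^ 2 = A) (hz : 0 < z.re) : A ^ (1 / 2 : ℂ) = z := by
  rw [← h, one_div]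
  exact sq_cpow_two_inv hz

/-! ### The quadratic Gauss sum -/

/-- The exponential `e^{2πi j/n}`; the numerator is an integer, so that it is periodic in `j`. -/
def ee (n : ℕ) (j : ℤ) : ℂ := cexp (2 * Real.pi * Complex.I * (j / n))

lemma ee_add (n : ℕ) (i j : ℤ) : ee n (i + j) = ee n i * ee n j := by
  rw [ee, ee, ee, ← Complex.exp_add]
  congr 1
  push_cast
  ring

lemma ee_mul_self (n : ℕ) (hn : n ≠ 0) (j : ℤ) : ee n (n * j) = 1 := by
  have hn' : (n : ℂ) ≠ 0 := by exact_mod_cast hn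
  rw [ee, Complex.exp_eq_one_iff]
  exact ⟨j, by push_cast; field_simp⟩

lemma ee_add_mul (n : ℕ) (hn : n ≠ 0) (i j : ℤ) : ee n (i + n * j) = ee n i := by
  rw [ee_add, ee_mul_self n hn, mul_one]

lemma ee_period (n : ℕ) (hn : n ≠ 0) {i j : ℤ} (h : (n : ℤ) ∣ i - j) : ee n i = ee n j := by
  obtain ⟨k, hk⟩ := h
  rw [show i = j + n * k by omega, ee_add_mul n hn]

lemma ee_mul_left (n k : ℕ) (hk : k ≠ 0) (j : ℤ) : ee (k * n) (k * j) = ee n j := by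
  have hkC : (k : ℂ) ≠ 0 := by exact_mod_cast hk
  rw [ee, ee]
  congr 2
  push_cast
  exact mul_div_mul_left _ _ hkC

/-- The inversion `τ ↦ -1/τ` of the theta series `∑ₖ exp(πi τ k²)` at `τ = 2/n + i/(y n²)`, with both
sides expanded into residue classes. Here `-1/τ = -n/2 + i/(4A)` with `A = y + i/(2n)`, so the
classes are modulo `n` on the left and modulo `2` on the right. -/
lemma theta_relation (n : ℕ) [NeZero n] (y : ℝ) (hy : 0 < y) :
    ((y : ℝ) : ℂ) ^ (1 / 2 : ℂ) * ∑ a : Fin n, ee n (((a : ℕ) : ℤ) ^ 2) * dualTheta n (a : ℕ) y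
      = 1 / ((1 / (y * n ^ 2) - 2 * Complex.I / n : ℂ)) ^ (1 / 2 : ℂ) *
        ((y + Complex.I / (2 * n) : ℂ) ^ (1 / 2 : ℂ) *
          ∑ a : Fin 2, cexp (-Real.pi * Complex.I * n / 2 * (((a : ℕ) : ℤ) : ℂ) ^ 2) *
            dualTheta 2 (a : ℕ) (y + Complex.I / (2 * n))) := by
  have hn : n ≠ 0 := NeZero.ne n
  have hnC : (n : ℂ) ≠ 0 := by exact_mod_cast hn
  have hnR : (0 : ℝ) < n := by exact_mod_cast Nat.pos_of_ne_zero hn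
  have hyC : (y : ℂ) ≠ 0 := by exact_mod_cast hy.ne'
  set A : ℂ := y + Complex.I / (2 * n) with hAdef
  set B : ℂ := 1 / (y * n ^ 2) - 2 * Complex.I / n with hBdef
  have hAre : 0 < A.re := by
    have : A = (y : ℂ) + ((1 / (2 * n) : ℝ) : ℂ) * Complex.I := by
      rw [hAdef]; push_cast; ring
    rw [this]; simpa using hy
  have hBre : 0 < B.re := by
    have : B = ((1 / (y * n ^ 2) : ℝ) : ℂ) + ((-2 / n : ℝ) : ℂ) * Complex.I := by
      rw [hBdef]; push_cast; ring
    rw [this, add_re, re_ofReal_mul, ofReal_re, Complex.I_re, mul_zero, add_zero]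
    positivity
  have hA0 : A ≠ 0 := by intro h; rw [h] at hAre; simp at hAre
  have hB0 : B ≠ 0 := by intro h; rw [h] at hBre; simp at hBre
  have hw1 : 0 < (1 / ((y : ℂ) * n ^ 2)).re := by
    have : (1 / ((y : ℂ) * n ^ 2)) = ((1 / (y * n ^ 2) : ℝ) : ℂ) := by push_cast; ring
    rw [this, ofReal_re]
    positivity
  have hw2 : 0 < (1 / (A * (2 : ℕ) ^ 2)).re := by
    have : 1 / (A * (2 : ℕ) ^ 2) = ((1 / 4 : ℝ) : ℂ) * A⁻¹ := by
      push_cast; field_simp; norm_num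
    rw [this, re_ofReal_mul, Complex.inv_re]
    have := normSq_pos.2 hA0
    positivity
  -- `1 / B = i n / 2 + 1 / (4 A)`
  have hinv : -Real.pi / B = -Real.pi * Complex.I * n / 2 + -Real.pi * (1 / (A * (2 : ℕ) ^ 2)) := by
    have hA2 : 2 * Complex.I * n * A = 2 * Complex.I * n * y - 1 := by
      rw [hAdef]
      field_simp
      linear_combination Complex.I_sq
    have hB2 : B * (y * n ^ 2) = -2 * Complex.I * n * A := by
      rw [neg_mul, neg_mul, neg_mul, hA2, hBdef]
      field_simp
      ring
    clear_value A B
    have hB3 : 1 / B = Complex.I * n * y / (2 * A) := by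
      rw [div_eq_div_iff hB0 (by simpa using hA0)]
      apply mul_right_cancel₀ hnC
      linear_combination (-Complex.I) * hB2 + 2 * n * A * Complex.I_sq
    rw [show -Real.pi / B = -Real.pi * (1 / B) by ring, hB3]
    push_cast
    field_simp
    linear_combination hA2
  rw [← tsum_periodic n (fun k => ee n (k ^ 2)) _ (y : ℂ) (by simpa using hy) hw1,
    ← tsum_periodic 2 (fun k => cexp (-Real.pi * Complex.I * n / 2 * (k : ℂ) ^ 2)) _ A hAre hw2]
  · have h := Complex.tsum_exp_neg_quadratic hBre 0
    simp only [mul_zero, zero_mul, add_zero] at h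
    convert h using 2
    · funext k
      rw [ee, ← Complex.exp_add]
      congr 1
      rw [hBdef]
      push_cast
      ring
    · refine tsum_congr fun k => ?_
      rw [hinv, ← Complex.exp_add, ← add_mul]
  -- `(2 j + a)² / 4 - a² / 4` is the integer `j² + j a`
  · intro j a
    rw [show (-Real.pi * Complex.I * n / 2 * ((j * (2 : ℕ) + a : ℤ) : ℂ) ^ 2)
      = -Real.pi * Complex.I * n / 2 * (a : ℂ) ^ 2
        + ((-(n * (j ^ 2 + j * a)) : ℤ) : ℂ) * (2 * Real.pi * Complex.I) by push_cast; ring,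
      Complex.exp_add, Complex.exp_int_mul_two_pi_mul_I, mul_one]
  · intro j a
    exact ee_period n hn ⟨j ^ 2 * n + 2 * j * a, by ring⟩

/-- Evaluation of the quadratic Gauss sum, as the limit of `theta_relation` when `y → ∞`. -/
lemma quadratic_sum (n : ℕ) (hn : n ≠ 0) :
    ∑ a ∈ Finset.range n, ee n ((a : ℤ) ^ 2)
      = Real.sqrt n * ((1 + Complex.I) / 2 * (1 + (-Complex.I) ^ n)) := by
  have : NeZero n := ⟨hn⟩
  have hnC : (n : ℂ) ≠ 0 := by exact_mod_cast hn
  have hnR : (0 : ℝ) < n := by exact_mod_cast Nat.pos_of_ne_zero hn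
  have hre : ∀ y : ℝ, ((y : ℂ) + Complex.I / (2 * n)).re = y := by
    intro y
    have : (y : ℂ) + Complex.I / (2 * n) = (y : ℂ) + ((1 / (2 * n) : ℝ) : ℂ) * Complex.I := by
      push_cast; ring
    rw [this]; simp
  have hL : Tendsto (fun y : ℝ => ∑ a : Fin n, ee n (((a : ℕ) : ℤ) ^ 2) * dualTheta n (a : ℕ) y)
      atTop (𝓝 (∑ a : Fin n, ee n (((a : ℕ) : ℤ) ^ 2) * 1)) := by
    refine tendsto_finsetSum _ fun a _ => Tendsto.const_mul _ ?_
    exact tendsto_dualTheta (A := fun y : ℝ => (y : ℂ)) (by simpa using! tendsto_id) n _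
  have hR : Tendsto (fun y : ℝ => ∑ a : Fin 2,
      cexp (-Real.pi * Complex.I * n / 2 * (((a : ℕ) : ℤ) : ℂ) ^ 2) *
            dualTheta 2 (a : ℕ) (y + Complex.I / (2 * n)))
      atTop (𝓝 (∑ a : Fin 2, cexp (-Real.pi * Complex.I * n / 2 * (((a : ℕ) : ℤ) : ℂ) ^ 2) * 1)) := by
    refine tendsto_finsetSum _ fun a _ => Tendsto.const_mul _ ?_
    exact tendsto_dualTheta (A := fun y : ℝ => (y : ℂ) + Complex.I / (2 * n))
      (by simpa only [hre] using! tendsto_id) 2 _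
  have hzero : Tendsto (fun y : ℝ => ((y⁻¹ : ℝ) : ℂ)) atTop (𝓝 0) := by
    exact_mod_cast (Complex.continuous_ofReal.tendsto 0).comp tendsto_inv_atTop_zero
  have hA : Tendsto (fun y : ℝ => (1 + ((y⁻¹ : ℝ) : ℂ) * (Complex.I / (2 * n))) ^ (1 / 2 : ℂ))
      atTop (𝓝 1) := by
    have h1 : Tendsto (fun y : ℝ => 1 + ((y⁻¹ : ℝ) : ℂ) * (Complex.I / (2 * n))) atTop (𝓝 1) := by
      simpa using (hzero.mul_const (Complex.I / (2 * n))).const_add 1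
    have := ((continuousAt_cpow_const (b := (1 / 2 : ℂ)) (a := 1) (by simp)).tendsto).comp h1
    rwa [one_cpow] at this
  -- the principal square root is identified by its positive real part
  have hroot : (-2 * Complex.I / n : ℂ) ^ (1 / 2 : ℂ) = (1 - Complex.I) / Real.sqrt n := by
    have hs : ((Real.sqrt n : ℝ) : ℂ) ^ 2 = n := by
      rw [← ofReal_pow, Real.sq_sqrt hnR.le]; simp
    refine cpow_half_eq ?_ ?_
    · rw [div_pow, hs]
      congr 1
      linear_combination Complex.I_sq
    · rw [Complex.div_ofReal_re]
      have := Real.sqrt_pos.2 hnR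
      simpa using this
  have hB : Tendsto (fun y : ℝ => (1 / (y * n ^ 2) - 2 * Complex.I / n : ℂ) ^ (1 / 2 : ℂ))
      atTop (𝓝 ((1 - Complex.I) / Real.sqrt n)) := by
    have h1 : Tendsto (fun y : ℝ => (1 / (y * n ^ 2) - 2 * Complex.I / n : ℂ)) atTop
        (𝓝 (-2 * Complex.I / n)) := by
      have := (hzero.mul_const (1 / (n : ℂ) ^ 2)).sub_const (2 * Complex.I / n)
      rw [zero_mul, zero_sub] at this
      rw [neg_mul, neg_div]
      refine this.congr fun y => ?_
      push_cast
      rw [one_div, one_div, mul_inv]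
    rw [← hroot]
    have hslit : (-2 * Complex.I / n : ℂ) ∈ slitPlane := by
      right
      have : (-2 * Complex.I / n : ℂ) = ((-2 / n : ℝ) : ℂ) * Complex.I := by push_cast; ring
      rw [this]
      simp [hn]
    exact ((continuousAt_cpow_const (b := (1 / 2 : ℂ)) hslit).tendsto).comp h1
  have hsq0 : ((Real.sqrt n : ℝ) : ℂ) ≠ 0 := by
    exact_mod_cast (Real.sqrt_pos.2 hnR).ne'
  have hI0 : (1 - Complex.I) ≠ 0 := by
    intro h
    simpa using congrArg Complex.re h
  -- both sides of the relation are divided by `√y`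
  have heq : ∀ᶠ y : ℝ in atTop,
      ∑ a : Fin n, ee n (((a : ℕ) : ℤ) ^ 2) * dualTheta n (a : ℕ) y =
      1 / ((1 / (y * n ^ 2) - 2 * Complex.I / n : ℂ)) ^ (1 / 2 : ℂ) *
        ((1 + ((y⁻¹ : ℝ) : ℂ) * (Complex.I / (2 * n))) ^ (1 / 2 : ℂ) *
          ∑ a : Fin 2, cexp (-Real.pi * Complex.I * n / 2 * (((a : ℕ) : ℤ) : ℂ) ^ 2) *
            dualTheta 2 (a : ℕ) (y + Complex.I / (2 * n))) := by
    filter_upwards [eventually_gt_atTop 0] with y hy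
    have h := theta_relation n y hy
    have hy0 : ((y : ℝ) : ℂ) ^ (1 / 2 : ℂ) ≠ 0 := by
      simp [cpow_eq_zero_iff, hy.ne']
    have hyC : (y : ℂ) ≠ 0 := by exact_mod_cast hy.ne'
    have hsplit : (y + Complex.I / (2 * n) : ℂ) ^ (1 / 2 : ℂ)
        = (y : ℂ) ^ (1 / 2 : ℂ) * (1 + ((y⁻¹ : ℝ) : ℂ) * (Complex.I / (2 * n))) ^ (1 / 2 : ℂ) := by
      have e : (y + Complex.I / (2 * n) : ℂ)
          = (y : ℂ) * (1 + ((y⁻¹ : ℝ) : ℂ) * (Complex.I / (2 * n))) := by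
        push_cast; field_simp
      have hx0 : (1 + ((y⁻¹ : ℝ) : ℂ) * (Complex.I / (2 * n))) ≠ 0 := by
        intro h0
        rw [h0, mul_zero] at e
        have := hre y
        rw [e, zero_re] at this
        exact hy.ne this
      rw [e, cpow_def_of_ne_zero (mul_ne_zero hyC hx0), cpow_def_of_ne_zero hyC,
        cpow_def_of_ne_zero hx0, Complex.log_ofReal_mul hy hx0, add_mul, Complex.exp_add,
        Complex.ofReal_log hy.le]
    rw [hsplit] at h
    apply mul_left_cancel₀ hy0
    rw [h]
    ring
  have hlim := tendsto_nhds_unique (hL.congr' heq)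
    ((tendsto_const_nhds (x := (1 : ℂ)).div hB (div_ne_zero hI0 hsq0)).mul (hA.mul hR))
  rw [Finset.sum_range]
  simp only [mul_one] at hlim
  rw [hlim, Fin.sum_univ_two]
  have hexp : cexp (-(Complex.I * Real.pi * n / 2)) = (-Complex.I) ^ n := by
    rw [← Complex.exp_neg_pi_div_two_mul_I, ← Complex.exp_nat_mul]
    congr 1
    ring
  simp only [Fin.val_zero, Fin.val_one, Nat.cast_zero, Nat.cast_one, Int.cast_zero, Int.cast_one]
  field_simp
  rw [hexp]
  simp
  left
  linear_combination Complex.I_sq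

/-- The factor `ε_n` of the Gauss sum of odd modulus `n`: `1` if `n ≡ 1` and `i` if `n ≡ 3` modulo
`4`. For even `n` it carries no meaning. -/
def eps (n : ℕ) : ℂ := if n % 4 = 1 then 1 else Complex.I

lemma quadratic_sum_odd (n : ℕ) (hn : Odd n) :
    ∑ a ∈ Finset.range n, ee n ((a : ℤ) ^ 2) = eps n * Real.sqrt n := by
  rw [quadratic_sum n hn.pos.ne', mul_comm]
  congr 1
  have h4 : (-Complex.I) ^ 4 = 1 := by
    linear_combination (Complex.I ^ 2 - 1) * Complex.I_sq
  rw [← Nat.div_add_mod n 4, pow_add, pow_mul, h4, one_pow, one_mul, eps, Nat.div_add_mod]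
  have hcases : n % 4 = 1 ∨ n % 4 = 3 := Nat.odd_mod_four_iff.1 (Nat.odd_iff.1 hn)
  rcases hcases with h | h
  · rw [h, if_pos rfl]
    linear_combination (-1 / 2 : ℂ) * Complex.I_sq
  · rw [h, if_neg (by norm_num)]
    linear_combination ((1 - Complex.I - Complex.I ^ 2) / 2 : ℂ) * Complex.I_sq

/-- Quadratic reciprocity: `(a|b)(b|a) ε_a ε_b = ε_{ab}`. -/
lemma eps_mul (a b : ℕ) (ha : Odd a) (hb : Odd b) (hab : a.Coprime b) :
    ((jacobiSym a b : ℤ) : ℂ) * (jacobiSym b a : ℤ) * (eps a * eps b) = eps (a * b) := by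
  have hsq : ((jacobiSym b a : ℤ) : ℂ) * (jacobiSym b a : ℤ) = 1 := by
    have := jacobiSym.sq_one (a := (b : ℤ)) (b := a) (by simpa using hab.symm)
    rw [sq] at this
    exact_mod_cast this
  have ha4 : a % 4 = 1 ∨ a % 4 = 3 := Nat.odd_mod_four_iff.1 (Nat.odd_iff.1 ha)
  have hb4 : b % 4 = 1 ∨ b % 4 = 3 := Nat.odd_mod_four_iff.1 (Nat.odd_iff.1 hb)
  have hm : (a * b) % 4 = (a % 4) * (b % 4) % 4 := Nat.mul_mod a b 4
  rcases ha4 with h | h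
  · rw [jacobiSym.quadratic_reciprocity_one_mod_four h hb, hsq]
    simp [eps, hm, h]
  · rcases hb4 with h' | h'
    · rw [jacobiSym.quadratic_reciprocity_one_mod_four' ha h', hsq]
      simp [eps, hm, h, h']
    · rw [jacobiSym.quadratic_reciprocity_three_mod_four h h']
      simp only [eps, hm, h, h']
      push_cast
      rw [neg_mul, hsq]
      simp

/-! ### Prime modulus -/

lemma sum_range_zmod (n : ℕ) [NeZero n] (F : ZMod n → ℂ) :
    ∑ b ∈ Finset.range n, F (b : ℤ) = ∑ x : ZMod n, F x := by
  refine Finset.sum_nbij' (fun b : ℕ => ((b : ℤ) : ZMod n)) (fun x => x.val) ?_ ?_ ?_ ?_ ?_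
  · simp
  · intro x _; exact Finset.mem_range.2 (ZMod.val_lt x)
  · intro b hb; simpa using ZMod.val_cast_of_lt (Finset.mem_range.1 hb)
  · intro x _; simp
  · simp

lemma ee_eq_stdAddChar (n : ℕ) [NeZero n] (j : ℤ) : ee n j = ZMod.stdAddChar (j : ZMod n) := by
  rw [ZMod.stdAddChar_coe, ee, mul_div_assoc]

/-- Orthogonality of the additive characters modulo `n`. -/
lemma sum_ee (n : ℕ) (hn : n ≠ 0) (t : ℤ) :
    ∑ b ∈ Finset.range n, ee n (t * b) = if (n : ℤ) ∣ t then (n : ℂ) else 0 := by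
  have : NeZero n := ⟨hn⟩
  have h := AddChar.sum_mulShift (R := ZMod n) (t : ZMod n) (ZMod.isPrimitive_stdAddChar n)
  rw [ZMod.card, ← sum_range_zmod] at h
  have e : ∑ b ∈ Finset.range n, ee n (t * b)
      = ∑ b ∈ Finset.range n, ZMod.stdAddChar (((b : ℤ) : ZMod n) * (t : ZMod n)) :=
    Finset.sum_congr rfl fun b _ => by rw [ee_eq_stdAddChar]; push_cast; rw [mul_comm]
  rw [e, h]
  have hi := ZMod.intCast_zmod_eq_zero_iff_dvd t n
  by_cases hd : (n : ℤ) ∣ t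
  · rw [if_pos (hi.2 hd), if_pos hd]
  · rw [if_neg (mt hi.1 hd), if_neg hd]; simp

/-- The Gauss sum of the Legendre symbol. Since `x` has `1 + (x|p)` square roots modulo `p`, for
`t = 1` it equals `∑_y e(y²/p)`; a unit `t` is absorbed in the summation variable, and both sides
vanish if `p ∣ t`. -/
lemma gauss_prime (p : ℕ) (hp : p.Prime) (hp2 : p ≠ 2) (t : ℤ) :
    ∑ b ∈ Finset.range p, ((jacobiSym b p : ℤ) : ℂ) * ee p (t * b)
      = (jacobiSym t p : ℤ) * (eps p * Real.sqrt p) := by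
  have : Fact p.Prime := ⟨hp⟩
  have : NeZero p := ⟨hp.ne_zero⟩
  have hodd : Odd p := hp.odd_of_ne_two hp2
  have hchar : ringChar (ZMod p) ≠ 2 := (ZMod.ringChar_zmod_n p).substr hp2
  let χ : MulChar (ZMod p) ℂ := (quadraticChar (ZMod p)).ringHomComp (Int.castRingHom ℂ)
  have hχ : ∀ a : ℤ, ((jacobiSym a p : ℤ) : ℂ) = χ (a : ZMod p) := by
    intro a
    rw [← jacobiSym.legendreSym.to_jacobiSym]
    rfl
  let ψ : AddChar (ZMod p) ℂ := ZMod.stdAddChar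
  have hL : ∀ s : ℤ, ∑ b ∈ Finset.range p, ((jacobiSym b p : ℤ) : ℂ) * ee p (s * b)
      = gaussSum χ (AddChar.mulShift ψ (s : ZMod p)) := by
    intro s
    rw [gaussSum, ← sum_range_zmod]
    refine Finset.sum_congr rfl fun b _ => ?_
    rw [hχ, ee_eq_stdAddChar, AddChar.mulShift_apply]
    push_cast
    rfl
  have hsum0 : ∑ x : ZMod p, χ x = 0 := by
    have := quadraticChar_sum_zero hchar
    have h2 := congrArg (Int.cast : ℤ → ℂ) this
    push_cast at h2
    exact h2
  have hψ0 : ∑ x : ZMod p, ψ x = 0 := by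
    have h := sum_ee p hp.ne_zero 1
    rw [if_neg (fun hd => hp.one_lt.ne' (Nat.dvd_one.1 (by exact_mod_cast hd)))] at h
    rw [← sum_range_zmod, ← h]
    refine Finset.sum_congr rfl fun b _ => ?_
    rw [one_mul, ee_eq_stdAddChar]
  -- each residue `x` has `1 + χ x` square roots
  have hmain : gaussSum χ ψ = eps p * Real.sqrt p := by
    rw [← quadratic_sum_odd p hodd]
    have h1 : ∑ a ∈ Finset.range p, ee p ((a : ℤ) ^ 2) = ∑ y : ZMod p, ψ (y ^ 2) := by
      rw [← sum_range_zmod]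
      refine Finset.sum_congr rfl fun b _ => ?_
      rw [ee_eq_stdAddChar]; push_cast; rfl
    have h2 : ∑ y : ZMod p, ψ (y ^ 2) = ∑ x : ZMod p, (χ x + 1) * ψ x := by
      rw [← Finset.sum_fiberwise Finset.univ (fun y : ZMod p => y ^ 2)]
      refine Finset.sum_congr rfl fun x _ => ?_
      have hc := quadraticChar_card_sqrts hchar x
      have hc' : ((Finset.univ.filter fun y : ZMod p => y ^ 2 = x).card : ℂ) = χ x + 1 := by
        have e : ({y : ZMod p | y ^ 2 = x} : Set (ZMod p)).toFinset
            = Finset.univ.filter fun y : ZMod p => y ^ 2 = x := by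
          ext; simp
        rw [e] at hc
        have := congrArg (Int.cast : ℤ → ℂ) hc
        push_cast at this
        exact this
      rw [← hc', ← nsmul_eq_mul, ← Finset.sum_const]
      refine Finset.sum_congr rfl fun y hy => ?_
      rw [(Finset.mem_filter.1 hy).2]
    rw [h1, h2]
    simp only [add_mul, one_mul, Finset.sum_add_distrib, hψ0, add_zero]
    rfl
  rw [hL, hχ]
  by_cases ht : (t : ZMod p) = 0
  · rw [ht, AddChar.mulShift_zero, MulChar.map_zero, zero_mul]
    simpa [gaussSum] using hsum0
  · have h := gaussSum_mulShift χ ψ (Units.mk0 _ ht)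
    rw [Units.val_mk0] at h
    have hsq : χ (t : ZMod p) * χ (t : ZMod p) = 1 := by
      have := quadraticChar_sq_one ht
      have h2 := congrArg (Int.cast : ℤ → ℂ) this
      push_cast at h2
      rw [sq] at h2
      exact h2
    rw [← hmain, ← h, ← mul_assoc, hsq, one_mul]

/-! ### Squarefree modulus -/

/-- The Chinese remainder theorem, parametrising residues modulo `a b` by `b x + a y`. -/
lemma sum_crt (a b : ℕ) (ha : a ≠ 0) (hb : b ≠ 0) (hab : a.Coprime b) (F : ℤ → ℂ)
    (hF : ∀ i j : ℤ, ((a * b : ℕ) : ℤ) ∣ i - j → F i = F j) :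
    ∑ n ∈ Finset.range (a * b), F n
      = ∑ x ∈ Finset.range a, ∑ y ∈ Finset.range b, F (b * x + a * y) := by
  rw [← Finset.sum_product']
  have hinj : Set.InjOn (fun z : ℕ × ℕ => (b * z.1 + a * z.2) % (a * b))
      (Finset.range a ×ˢ Finset.range b : Finset (ℕ × ℕ)) := by
    rintro ⟨x, y⟩ hxy ⟨x', y'⟩ hxy' h
    simp only [Finset.coe_product, Finset.coe_range, Set.mem_prod, Set.mem_Iio] at hxy hxy'
    have h : b * x + a * y ≡ b * x' + a * y' [MOD a * b] := h
    have h1 : x ≡ x' [MOD a] := by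
      have := h.of_mul_right b
      simp only [Nat.ModEq, Nat.add_mul_mod_self_left] at this
      exact Nat.ModEq.cancel_left_of_coprime hab this
    have h2 : y ≡ y' [MOD b] := by
      have := h.of_mul_left a
      simp only [Nat.ModEq, Nat.mul_add_mod_self_left] at this
      exact Nat.ModEq.cancel_left_of_coprime hab.symm this
    exact Prod.ext (h1.eq_of_lt_of_lt hxy.1 hxy'.1) (h2.eq_of_lt_of_lt hxy.2 hxy'.2)
  have hmaps : Set.MapsTo (fun z : ℕ × ℕ => (b * z.1 + a * z.2) % (a * b))
      (Finset.range a ×ˢ Finset.range b : Finset (ℕ × ℕ)) (Finset.range (a * b)) := by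
    intro z _
    simpa using Nat.mod_lt _ (Nat.pos_of_ne_zero (mul_ne_zero ha hb))
  symm
  refine Finset.sum_nbij (fun z : ℕ × ℕ => (b * z.1 + a * z.2) % (a * b)) hmaps hinj
    (Finset.surjOn_of_injOn_of_card_le _ hmaps hinj (by simp)) ?_
  rintro ⟨x, y⟩ _
  apply hF
  push_cast
  exact (Int.mod_modEq _ _).dvd

/-- Twisted multiplicativity: for completely multiplicative `f`, `g` of coprime periods `a`, `b`,
the exponential sum modulo `a b` is the product of those modulo `a` and `b`, up to `f(b) g(a)`. -/
lemma twisted_mul (a b : ℕ) (ha : a ≠ 0) (hb : b ≠ 0) (hab : a.Coprime b) (f g : ℤ → ℂ)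
    (hf : ∀ i j : ℤ, (a : ℤ) ∣ i - j → f i = f j) (hg : ∀ i j : ℤ, (b : ℤ) ∣ i - j → g i = g j)
    (hfm : ∀ i j, f (i * j) = f i * f j) (hgm : ∀ i j, g (i * j) = g i * g j) (t : ℤ) :
    ∑ n ∈ Finset.range (a * b), f n * g n * ee (a * b) (t * n)
      = f b * g a * ((∑ x ∈ Finset.range a, f x * ee a (t * x)) *
        ∑ y ∈ Finset.range b, g y * ee b (t * y)) := by
  rw [sum_crt a b ha hb hab (fun n => f n * g n * ee (a * b) (t * n)), Finset.sum_mul_sum,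
    Finset.mul_sum]
  · refine Finset.sum_congr rfl fun x _ => ?_
    rw [Finset.mul_sum]
    refine Finset.sum_congr rfl fun y _ => ?_
    rw [hf (b * x + a * y) (b * x) ⟨y, by ring⟩, hg (b * x + a * y) (a * y) ⟨x, by ring⟩, hfm, hgm,
      show t * ((b : ℤ) * x + a * y) = b * (t * x) + a * (t * y) by ring, ee_add,
      ee_mul_left b a ha, mul_comm a b, ee_mul_left a b hb]
    ring
  · intro i j h
    have h' : (a : ℤ) * b ∣ i - j := by exact_mod_cast h
    rw [hf i j ((Dvd.intro _ rfl).trans h'), hg i j ((Dvd.intro_left _ rfl).trans h'),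
      ee_period (a * b) (mul_ne_zero ha hb) (i := t * i) (j := t * j)]
    rw [← mul_sub]
    exact h.mul_left t

lemma jacobi_period (n : ℕ) {i j : ℤ} (h : (n : ℤ) ∣ i - j) : jacobiSym i n = jacobiSym j n :=
  jacobiSym.mod_left' (Int.modEq_iff_dvd.2 h).symm

/-- Gauss sum of the Jacobi symbol of squarefree modulus. -/
lemma gauss_squarefree (n : ℕ) : Odd n → Squarefree n → ∀ t : ℤ,
    ∑ b ∈ Finset.range n, ((jacobiSym b n : ℤ) : ℂ) * ee n (t * b)
      = (jacobiSym t n : ℤ) * (eps n * Real.sqrt n) := by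
  induction n using Nat.recOnPosPrimePosCoprime with
  | zero => intro h; simp at h
  | one => intro _ _ t; simp [eps, ee]
  | prime_pow p k hp hk =>
    intro ho hs t
    obtain rfl : k = 1 := ((Nat.squarefree_pow_iff hp.ne_one hk.ne').1 hs).2
    rw [pow_one] at ho ⊢
    exact gauss_prime p hp (by rintro rfl; exact absurd ho (by decide)) t
  | coprime a b ha hb hab iha ihb =>
    intro ho hs t
    obtain ⟨hoa, hob⟩ := Nat.odd_mul.1 ho
    obtain ⟨_, hsa, hsb⟩ := Nat.squarefree_mul_iff.1 hs
    have ha0 : a ≠ 0 := by omega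
    have hb0 : b ≠ 0 := by omega
    have h := twisted_mul a b ha0 hb0 hab (fun i => ((jacobiSym i a : ℤ) : ℂ))
      (fun i => ((jacobiSym i b : ℤ) : ℂ))
      (fun i j h => by simp only [jacobi_period a h]) (fun i j h => by simp only [jacobi_period b h])
      (fun i j => by simp only [jacobiSym.mul_left]; push_cast; rfl)
      (fun i j => by simp only [jacobiSym.mul_left]; push_cast; rfl) t
    simp only [iha hoa hsa, ihb hob hsb] at h
    simp only [jacobiSym.mul_right' _ ha0 hb0, Int.cast_mul]
    rw [h, ← eps_mul a b hoa hob hab]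
    push_cast
    rw [Real.sqrt_mul (by positivity)]
    push_cast
    ring

/-- The Ramanujan sum of squarefree modulus `n`, with the principal character written as the square
of the Jacobi symbol. At a prime `p` it is `p - 1` if `p ∣ t` and `-1` otherwise. -/
lemma ramanujan_squarefree (n : ℕ) : Squarefree n → ∀ t : ℤ,
    ∑ b ∈ Finset.range n, ((jacobiSym b n : ℤ) : ℂ) ^ 2 * ee n (t * b)
      = ∏ p ∈ n.primeFactors, ((p : ℂ) - 1 - p * ((jacobiSym t p : ℤ) : ℂ) ^ 2) := by
  induction n using Nat.recOnPosPrimePosCoprime with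
  | zero => intro h; simp at h
  | one => intro _ t; simp [ee]
  | prime_pow p k hp hk =>
    intro hs t
    obtain rfl : k = 1 := ((Nat.squarefree_pow_iff hp.ne_one hk.ne').1 hs).2
    have : Fact p.Prime := ⟨hp⟩
    have hsq : ∀ b : ℤ, ((jacobiSym b p : ℤ) : ℂ) ^ 2 = 1 - if (p : ℤ) ∣ b then 1 else 0 := by
      intro b
      split_ifs with h
      · have : jacobiSym b p = 0 := by
          rw [← jacobiSym.legendreSym.to_jacobiSym, legendreSym.eq_zero_iff,
            ZMod.intCast_zmod_eq_zero_iff_dvd]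
          exact h
        simp [this]
      · have : jacobiSym b p ^ 2 = 1 := by
          rw [← jacobiSym.legendreSym.to_jacobiSym]
          apply legendreSym.sq_one
          rwa [Ne, ZMod.intCast_zmod_eq_zero_iff_dvd]
        rw [sub_zero]
        exact_mod_cast this
    rw [pow_one, hp.primeFactors, Finset.prod_singleton, hsq t]
    simp only [hsq, sub_mul, one_mul, Finset.sum_sub_distrib, sum_ee p hp.ne_zero]
    rw [Finset.sum_eq_single 0]
    · simp only [Nat.cast_zero, dvd_zero, if_true, mul_zero]
      have : ee p 0 = 1 := by simp [ee]
      rw [this]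
      split_ifs <;> ring
    · intro b hb hb0
      rw [if_neg, zero_mul]
      intro h
      exact hb0 (Nat.eq_zero_of_dvd_of_lt (by exact_mod_cast h) (Finset.mem_range.1 hb))
    · intro h; exact absurd (Finset.mem_range.2 hp.pos) h
  | coprime a b ha hb hab iha ihb =>
    intro hs t
    obtain ⟨_, hsa, hsb⟩ := Nat.squarefree_mul_iff.1 hs
    have ha0 : a ≠ 0 := by omega
    have hb0 : b ≠ 0 := by omega
    have h := twisted_mul a b ha0 hb0 hab (fun i => ((jacobiSym i a : ℤ) : ℂ) ^ 2)
      (fun i => ((jacobiSym i b : ℤ) : ℂ) ^ 2)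
      (fun i j h => by simp only [jacobi_period a h]) (fun i j h => by simp only [jacobi_period b h])
      (fun i j => by simp only [jacobiSym.mul_left]; push_cast; ring)
      (fun i j => by simp only [jacobiSym.mul_left]; push_cast; ring) t
    simp only [iha hsa, ihb hsb] at h
    have h1 : ((jacobiSym b a : ℤ) : ℂ) ^ 2 = 1 := by
      exact_mod_cast jacobiSym.sq_one (a := (b : ℤ)) (b := a) (by simpa using hab.symm)
    have h2 : ((jacobiSym a b : ℤ) : ℂ) ^ 2 = 1 := by
      exact_mod_cast jacobiSym.sq_one (a := (a : ℤ)) (b := b) (by simpa using hab)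
    simp only [jacobiSym.mul_right' _ ha0 hb0, Int.cast_mul, mul_pow]
    rw [h, h1, h2, hab.primeFactors_mul, Finset.prod_union hab.disjoint_primeFactors, one_mul,
      one_mul]

/-! ### The Jacobi symbol and the radicals of the modulus -/

lemma jacobi_prod (a : ℤ) (s : Finset ℕ) (f : ℕ → ℕ) (hf : ∀ i ∈ s, f i ≠ 0) :
    jacobiSym a (∏ i ∈ s, f i) = ∏ i ∈ s, jacobiSym a (f i) := by
  induction s using Finset.induction_on with
  | empty => simp
  | insert i s hi ih =>
    rw [Finset.prod_insert hi, Finset.prod_insert hi, jacobiSym.mul_right' _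
      (hf i (Finset.mem_insert_self i s))
      (Finset.prod_ne_zero_iff.2 fun j hj => hf j (Finset.mem_insert_of_mem hj)),
      ih fun j hj => hf j (Finset.mem_insert_of_mem hj)]

lemma jacobi_factorization (a : ℤ) (m : ℕ) (hm : m ≠ 0) :
    jacobiSym a m = ∏ p ∈ m.primeFactors, jacobiSym a p ^ m.factorization p := by
  conv_lhs => rw [← Nat.prod_factorization_pow_eq_self hm]
  rw [Finsupp.prod, Nat.support_factorization, jacobi_prod]
  · simp only [jacobiSym.pow_right]
  · intro p hp
    exact pow_ne_zero _ (Nat.prime_of_mem_primeFactors hp).ne_zero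

/-- For odd positive `m` the Kronecker symbol is the Jacobi symbol. -/
lemma kron_eq (a : ℤ) (m : ℕ) (hm : Odd m) : Paper.kron a m = jacobiSym a m := by
  have hm0 : m ≠ 0 := hm.pos.ne'
  rw [Paper.kron, if_neg (by exact_mod_cast hm0), if_neg (by omega), one_mul, Int.natAbs_natCast,
    jacobi_factorization a m hm0, Finsupp.prod, Nat.support_factorization]
  refine Finset.prod_congr rfl fun p hp => ?_
  have hpp := Nat.prime_of_mem_primeFactors hp
  have hp2 : p ≠ 2 := by
    rintro rfl
    exact Nat.not_even_iff_odd.2 hm (even_iff_two_dvd.2 (Nat.dvd_of_mem_primeFactors hp))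
  rw [Paper.kronP, if_neg hp2, dif_pos hpp]
  have : Fact p.Prime := ⟨hpp⟩
  rw [jacobiSym.legendreSym.to_jacobiSym]

/-- `(b | m)` is the product of the principal character modulo `rad_E m` and `(b | rad_O m)`. -/
lemma jacobi_rad (a : ℤ) (m : ℕ) (hm : m ≠ 0) :
    jacobiSym a m = jacobiSym a (Paper.radE m) ^ 2 * jacobiSym a (Paper.radO m) := by
  have hne : ∀ p ∈ m.primeFactors, p ≠ 0 := fun p hp =>
    (Nat.prime_of_mem_primeFactors hp).ne_zero
  rw [jacobi_factorization a m hm, Paper.radE, Paper.radO,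
    jacobi_prod _ _ _ fun p hp => hne p (Finset.mem_filter.1 hp).1,
    jacobi_prod _ _ _ fun p hp => hne p (Finset.mem_filter.1 hp).1, ← Finset.prod_pow,
    ← Finset.prod_filter_mul_prod_filter_not m.primeFactors (fun p => Even (m.factorization p))]
  simp only [Nat.not_even_iff_odd]
  congr 1
  · refine Finset.prod_congr rfl fun p hp => ?_
    obtain ⟨hp, he⟩ := Finset.mem_filter.1 hp
    have h0 : m.factorization p ≠ 0 := by
      rw [← Finsupp.mem_support_iff, Nat.support_factorization]; exact hp
    rcases jacobiSym.trichotomy a p with h | h | h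
    · rw [h, zero_pow h0, zero_pow two_ne_zero]
    · rw [h, one_pow, one_pow]
    · rw [h, he.neg_one_pow, neg_one_sq]
  · refine Finset.prod_congr rfl fun p hp => ?_
    obtain ⟨hp, ho⟩ := Finset.mem_filter.1 hp
    rcases jacobiSym.trichotomy a p with h | h | h
    · rw [h, zero_pow ho.pos.ne']
    · rw [h, one_pow]
    · rw [h, ho.neg_one_pow]

lemma radP_dvd (m : ℕ) (hm : m ≠ 0) : Paper.radP m ∣ m := by
  conv_rhs => rw [← Nat.prod_factorization_pow_eq_self hm]
  rw [Finsupp.prod, Nat.support_factorization,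
    ← Finset.prod_filter_mul_prod_filter_not m.primeFactors (fun p => Even (m.factorization p)),
    Paper.radP, Paper.radE, Paper.radO, ← Finset.prod_pow]
  simp only [Nat.not_even_iff_odd]
  refine mul_dvd_mul (Finset.prod_dvd_prod_of_dvd _ _ fun p hp => ?_)
    (Finset.prod_dvd_prod_of_dvd _ _ fun p hp => ?_)
  · obtain ⟨hp, k, hk⟩ := Finset.mem_filter.1 hp
    have h0 : m.factorization p ≠ 0 := by
      rw [← Finsupp.mem_support_iff, Nat.support_factorization]; exact hp
    exact pow_dvd_pow p (by omega)
  · exact dvd_pow_self p (Finset.mem_filter.1 hp).2.pos.ne'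

lemma rad_squarefree (m : ℕ) : Squarefree (Paper.radE m * Paper.radO m) := by
  have : Paper.radE m * Paper.radO m = ∏ p ∈ m.primeFactors, p := by
    rw [Paper.radE, Paper.radO,
      ← Finset.prod_filter_mul_prod_filter_not m.primeFactors (fun p => Even (m.factorization p))]
    simp only [Nat.not_even_iff_odd]
  rw [this]
  refine Finset.squarefree_prod_of_pairwise_isCoprime ?_ ?_
  · intro p hp q hq hpq
    exact Nat.coprime_iff_isRelPrime.1 ((Nat.coprime_primes (Nat.prime_of_mem_primeFactors hp)
      (Nat.prime_of_mem_primeFactors hq)).2 hpq)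
  · intro p hp
    exact (Nat.prime_of_mem_primeFactors hp).squarefree

/-- With `u` the number of primes `p ≡ 3` modulo `4` dividing the squarefree number `n`, the
congruence `n ≡ (-1)^u` modulo `4` decides the parity of `u`, on which alone `i^{u²}` depends. -/
lemma eps_eq_I_pow (n : ℕ) (ho : Odd n) (hs : Squarefree n) :
    Complex.I ^ ((n.primeFactors.filter fun p => p % 4 = 3).card ^ 2) = eps n := by
  set u := (n.primeFactors.filter fun p => p % 4 = 3).card with hu
  have hχ : ZMod.χ₄ (n : ZMod 4) = (-1) ^ u := by
    conv_lhs => rw [← Nat.prod_primeFactors_of_squarefree hs]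
    rw [Nat.cast_prod, map_prod, hu, ← Finset.prod_const, Finset.prod_filter]
    refine Finset.prod_congr rfl fun p hp => ?_
    have hpo : Odd p := ho.of_dvd_nat (Nat.dvd_of_mem_primeFactors hp)
    have h2 := Nat.odd_iff.1 hpo
    rcases Nat.odd_mod_four_iff.1 h2 with h | h
    · rw [ZMod.χ₄_nat_one_mod_four h, if_neg (by omega)]
    · rw [ZMod.χ₄_nat_three_mod_four h, if_pos h]
  have h4 : Complex.I ^ 4 = 1 := Complex.I_pow_four
  rcases Nat.odd_mod_four_iff.1 (Nat.odd_iff.1 ho) with h | h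
  · rw [ZMod.χ₄_nat_one_mod_four h] at hχ
    have hev : Even u := by
      by_contra hc
      rw [(Nat.not_even_iff_odd.1 hc).neg_one_pow] at hχ
      norm_num at hχ
    obtain ⟨k, hk⟩ := hev
    rw [eps, if_pos h, hk, show (k + k) ^ 2 = 4 * k ^ 2 by ring, pow_mul, h4, one_pow]
  · rw [ZMod.χ₄_nat_three_mod_four h] at hχ
    have hod : Odd u := by
      by_contra hc
      rw [(Nat.not_odd_iff_even.1 hc).neg_one_pow] at hχ
      norm_num at hχ
    obtain ⟨k, hk⟩ := hod
    rw [eps, if_neg (by omega), hk, show (2 * k + 1) ^ 2 = 4 * (k ^ 2 + k) + 1 by ring, pow_succ,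
      pow_mul, h4, one_pow, one_mul]

lemma sum_range_digits (r q : ℕ) (F : ℕ → ℂ) :
    ∑ b ∈ Finset.range (r * q), F b
      = ∑ c ∈ Finset.range q, ∑ x ∈ Finset.range r, F (x + r * c) := by
  induction q with
  | zero => simp
  | succ q ih =>
    rw [Nat.mul_succ, Finset.sum_range_add, ih, Finset.sum_range_succ]
    simp only [add_comm]

/-- For `f` of period `r`, writing `b = x + r c` turns the sum over `c` into a complete sum of
additive characters modulo `q`. -/
lemma sum_inflate (r q : ℕ) (hr : r ≠ 0) (hq : q ≠ 0) (f : ℤ → ℂ)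
    (hf : ∀ i j : ℤ, (r : ℤ) ∣ i - j → f i = f j) (t : ℤ) :
    ∑ b ∈ Finset.range (r * q), f b * ee (r * q) (t * b)
      = (∑ x ∈ Finset.range r, f x * ee (r * q) (t * x)) * if (q : ℤ) ∣ t then (q : ℂ) else 0 := by
  rw [sum_range_digits, Finset.sum_comm, ← sum_ee q hq t, Finset.sum_mul]
  refine Finset.sum_congr rfl fun x _ => ?_
  rw [Finset.mul_sum]
  refine Finset.sum_congr rfl fun c _ => ?_
  push_cast
  rw [hf (x + r * c) x ⟨c, by ring⟩, show t * ((x : ℤ) + r * c) = t * x + r * (t * c) by ring,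
    ee_add, ee_mul_left q r hr, mul_assoc]

lemma eQ_eq_ee (m : ℕ) (j : ℤ) : Paper.eQ ((j : ℚ) / m) = ee m j := by
  rw [Paper.eQ, Paper.e2, ee]
  push_cast
  rfl

end GaussEval


/-! ### Arbitrary odd modulus -/

open Paper in
theorem gauss_sum_evaluation (m : ℕ) (hm0 : 0 < m) (hm : Odd m) (t : ℤ)
    (u : ℕ) (hu : u = ((radO m).primeFactors.filter (fun p => p % 4 = 3)).card) :
    (¬ ((irad m : ℤ) ∣ t) →
      ∑ b ∈ Finset.range m, (kron (b : ℤ) (m : ℤ) : ℂ) * eQ (((t * b : ℤ) : ℚ) / m) = 0) ∧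
    (((irad m : ℤ) ∣ t) →
      ∑ b ∈ Finset.range m, (kron (b : ℤ) (m : ℤ) : ℂ) * eQ (((t * b : ℤ) : ℚ) / m) =
        Complex.I ^ (u ^ 2) * ((m : ℂ) / (Real.sqrt (radP m) : ℝ)) *
          (kron (t / (iradP m : ℤ)) (radO m : ℤ) : ℂ) *
          ∏ p ∈ (radE m).primeFactors,
            ((p : ℂ) - 1 - (p : ℂ) * (kron (t / (irad m : ℤ)) (p : ℤ) : ℂ) ^ 2)) := by
  open GaussEval in
  have hmne : m ≠ 0 := hm0.ne'
  obtain ⟨k, hk⟩ := radP_dvd m hmne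
  have hsf := rad_squarefree m
  obtain ⟨hco, hsE, hsO⟩ := Nat.squarefree_mul_iff.1 hsf
  have hoEO : Odd (radP m) := hm.of_dvd_nat ⟨k, hk⟩
  have hOo : Odd (radO m) := (Nat.odd_mul.1 hoEO).2
  have hEo : Odd (radE m) := by
    have := (Nat.odd_mul.1 hoEO).1
    exact (Nat.odd_pow_iff two_ne_zero).1 this
  have hE0 : radE m ≠ 0 := hEo.pos.ne'
  have hO0 : radO m ≠ 0 := hOo.pos.ne'
  have hk0 : k ≠ 0 := by rintro rfl; omega
  have hiradP : iradP m = k := by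
    rw [iradP]
    exact Nat.div_eq_of_eq_mul_right hoEO.pos hk
  have hmr : m = rad m * (radE m * k) := by
    conv_lhs => rw [hk]
    rw [radP, rad]; ring
  have hr0 : rad m ≠ 0 := mul_ne_zero hE0 hO0
  have hirad : irad m = radE m * k := by
    rw [irad]
    exact Nat.div_eq_of_eq_mul_right (Nat.pos_of_ne_zero hr0) hmr
  let f : ℤ → ℂ := fun i => ((jacobiSym i (radE m) : ℤ) : ℂ) ^ 2 * ((jacobiSym i (radO m) : ℤ) : ℂ)
  have hf : ∀ i j : ℤ, (rad m : ℤ) ∣ i - j → f i = f j := by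
    intro i j h
    have h' : (radE m : ℤ) * radO m ∣ i - j := by
      rw [rad] at h; exact_mod_cast h
    simp only [f, jacobi_period _ ((Dvd.intro _ rfl).trans h'),
      jacobi_period _ ((Dvd.intro_left _ rfl).trans h')]
  have hsum : ∑ b ∈ Finset.range m, (kron (b : ℤ) (m : ℤ) : ℂ) * eQ (((t * b : ℤ) : ℚ) / m)
      = (∑ x ∈ Finset.range (rad m), f x * ee (rad m * irad m) (t * x)) *
        if (irad m : ℤ) ∣ t then (irad m : ℂ) else 0 := by
    rw [← sum_inflate (rad m) (irad m) hr0 (by rw [hirad]; exact mul_ne_zero hE0 hk0) f hf t]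
    rw [hirad, ← hmr]
    refine Finset.sum_congr rfl fun b _ => ?_
    rw [kron_eq _ _ hm, eQ_eq_ee, jacobi_rad _ _ hmne]
    push_cast
    rfl
  refine ⟨fun ht => by rw [hsum, if_neg ht, mul_zero], fun ht => ?_⟩
  rw [hsum, if_pos ht]
  obtain ⟨s, hs⟩ := ht
  have hq0 : irad m ≠ 0 := by rw [hirad]; exact mul_ne_zero hE0 hk0
  have ht1 : t / (irad m : ℤ) = s := by
    rw [hs]; exact Int.mul_ediv_cancel_left _ (by exact_mod_cast hq0)
  have ht2 : t / (iradP m : ℤ) = radE m * s := by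
    rw [hiradP, hs, hirad, show ((radE m * k : ℕ) : ℤ) * s = k * (radE m * s) by push_cast; ring]
    exact Int.mul_ediv_cancel_left _ (by exact_mod_cast hk0)
  have hinner : ∑ x ∈ Finset.range (rad m), f x * ee (rad m * irad m) (t * x)
      = ∑ x ∈ Finset.range (radE m * radO m), ((jacobiSym x (radE m) : ℤ) : ℂ) ^ 2 *
        ((jacobiSym x (radO m) : ℤ) : ℂ) * ee (radE m * radO m) (s * x) := by
    refine Finset.sum_congr rfl fun x _ => ?_
    rw [hs, mul_comm (rad m), mul_assoc ((irad m : ℕ) : ℤ) s (x : ℤ), ee_mul_left _ _ hq0]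
    rfl
  -- the factor `(rad_O | rad_E)²` produced by the splitting is trivial
  have hEO1 : ((jacobiSym (radO m) (radE m) : ℤ) : ℂ) ^ 2 = 1 := by
    exact_mod_cast jacobiSym.sq_one (a := (radO m : ℤ)) (b := radE m) (by simpa using hco.symm)
  rw [hinner, twisted_mul (radE m) (radO m) hE0 hO0 hco
    (fun i => ((jacobiSym i (radE m) : ℤ) : ℂ) ^ 2) (fun i => ((jacobiSym i (radO m) : ℤ) : ℂ))
    (fun i j h => by simp only [jacobi_period _ h]) (fun i j h => by simp only [jacobi_period _ h])
    (fun i j => by simp only [jacobiSym.mul_left]; push_cast; ring)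
    (fun i j => by simp only [jacobiSym.mul_left]; push_cast; rfl) s,
    ramanujan_squarefree _ hsE, gauss_squarefree _ hOo hsO, hEO1, one_mul, hu,
    eps_eq_I_pow _ hOo hsO, ht1, ht2, kron_eq _ _ hOo, jacobiSym.mul_left]
  have hprod : ∏ p ∈ (radE m).primeFactors,
      ((p : ℂ) - 1 - (p : ℂ) * (kron s (p : ℤ) : ℂ) ^ 2)
      = ∏ p ∈ (radE m).primeFactors, ((p : ℂ) - 1 - p * ((jacobiSym s p : ℤ) : ℂ) ^ 2) := by
    refine Finset.prod_congr rfl fun p hp => ?_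
    rw [kron_eq _ _ (hEo.of_dvd_nat (Nat.dvd_of_mem_primeFactors hp))]
  have hsqrt : (m : ℂ) / (Real.sqrt (radP m) : ℝ) = irad m * Real.sqrt (radO m) := by
    have h1 : Real.sqrt (radP m) = radE m * Real.sqrt (radO m) := by
      rw [radP]
      push_cast
      rw [Real.sqrt_mul (by positivity), Real.sqrt_sq (by positivity)]
    have hOpos : (0 : ℝ) < radO m := by exact_mod_cast hOo.pos
    have h2 : ((Real.sqrt (radO m) : ℝ) : ℂ) ≠ 0 := by
      exact_mod_cast (Real.sqrt_pos.2 hOpos).ne'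
    have h3 : ((Real.sqrt (radO m) : ℝ) : ℂ) ^ 2 = radO m := by
      rw [← Complex.ofReal_pow, Real.sq_sqrt hOpos.le]; simp
    have hEC : (radE m : ℂ) ≠ 0 := by exact_mod_cast hE0
    rw [h1, div_eq_iff (by push_cast; exact mul_ne_zero hEC h2)]
    have h4 : (m : ℂ) = radE m * radO m * irad m := by
      have : m = radE m * radO m * irad m := by rw [hirad]; exact hmr
      exact_mod_cast this
    rw [h4, ← h3]
    push_cast
    ring
  rw [hprod, hsqrt]
  push_cast
  ring
end
end

section
/- Let r be an even integer and l a positive integer with 24 | r(l−1), and let n be an integer. Then, writing d = l/a: (i) for every positive divisor a of l, the quantity r(d−1)/4 is an integer; (ii) ∑_{0<a|l} a^{r/2}·e(−r(d−1)/8)·∑_{0≤b<d, gcd(b,a,d)=1} e((n−rl²)b/(24al))·P_r((n/a²−r)/24) = ∑_{0<a|l} a^{r/2}·(−1)^{r(d−1)/4}·∑_t μ(t)·(d/t)·P_r((n/a²−r)/24), where in the inner sum t ranges over the positive divisors of gcd(a,d) that are divisible by 24al/gcd(24al, n−rl²), and μ is the Möbius function; (iii) if moreover l is squarefree, this common value equals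 l·∑_{0<a|l, 24al | n−rl²} a^{r/2−1}·(−1)^{r(d−1)/4}·P_r((n/a²−r)/24). -/
/-!
Write `d = l / a`. The argument is termwise in `a`. A term with `P ((n / a² - r) / 24) ≠ 0` has
`n = a² (r + 24 m)` for some `m : ℕ`, and `24 ∣ r (d² - 1)` then gives `n - r l² = 24 a² k` with
`k : ℤ` (`exists_eq_of_coeff_ne_zero`). Hence the exponential sum over `b` becomes
`∑ e(k b / d)` over `b < d` prime to `gcd(a, d)`. Detecting coprimality by Möbius inversion and
summing the resulting geometric series yields `∑ μ(t) d / t` over those `t ∣ gcd(a, d)` with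
`d ∣ k t` (`sum_eQ_coprime`), and `d ∣ k t` is the divisibility condition on `t` in the statement
(`div_gcd_dvd_iff`). The eighth root of unity is a sign because `4 ∣ r (d - 1)`.
For squarefree `l`, the numbers `a` and `d` are coprime, so only `t = 1` survives.
-/

set_option maxHeartbeats 1000000
set_option synthInstance.maxHeartbeats 200000

noncomputable section

open Complex UpperHalfPlane

namespace Paper

/-! ### Exponential sums -/

lemma eQ_int (m : ℤ) : eQ (m : ℚ) = 1 := by
  unfold eQ e2
  rw [Complex.exp_eq_one_iff]
  exact ⟨m, by push_cast; ring⟩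

lemma eQ_nsmul (j : ℕ) (x : ℚ) : eQ (j * x) = eQ x ^ j := by
  unfold eQ e2
  rw [← Complex.exp_nat_mul]
  congr 1
  push_cast
  ring

lemma eQ_eq_one_iff (x : ℚ) : eQ x = 1 ↔ ∃ m : ℤ, x = m := by
  refine ⟨fun h => ?_, fun ⟨m, hm⟩ => hm ▸ eQ_int m⟩
  unfold eQ e2 at h
  obtain ⟨m, hm⟩ := Complex.exp_eq_one_iff.1 h
  refine ⟨m, ?_⟩
  rw [mul_comm] at hm
  have := mul_right_cancel₀ Complex.two_pi_I_ne_zero hm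
  exact_mod_cast this

lemma eQ_neg_half (m : ℤ) : eQ (-(m : ℚ) / 2) = (-1 : ℂ) ^ m := by
  have h : eQ (-(m : ℚ) / 2) = Complex.exp (m * (-(Real.pi * Complex.I))) := by
    unfold eQ e2
    congr 1
    push_cast
    ring
  rw [h, Complex.exp_int_mul, Complex.exp_neg, Complex.exp_pi_mul_I]
  norm_num

lemma sum_eQ_range (m : ℕ) (hm : 0 < m) (k : ℤ) :
    ∑ j ∈ Finset.range m, eQ ((k : ℚ) * j / m) = if (m : ℤ) ∣ k then (m : ℂ) else 0 := by
  have hm' : (m : ℚ) ≠ 0 := by positivity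
  have h1 : ∀ j ∈ Finset.range m, eQ ((k : ℚ) * j / m) = eQ ((k : ℚ) / m) ^ j := by
    intro j _
    rw [← eQ_nsmul]
    congr 1
    ring
  have h2 : eQ ((k : ℚ) / m) ^ m = 1 := by
    rw [← eQ_nsmul, mul_div_cancel₀ _ hm', eQ_int]
  have h3 : eQ ((k : ℚ) / m) = 1 ↔ (m : ℤ) ∣ k := by
    rw [eQ_eq_one_iff]
    constructor
    · rintro ⟨c, hc⟩
      refine ⟨c, ?_⟩
      rw [div_eq_iff hm'] at hc
      rw [mul_comm]
      exact_mod_cast hc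
    · rintro ⟨c, rfl⟩
      exact ⟨c, by push_cast; field_simp⟩
  rw [Finset.sum_congr rfl h1]
  split_ifs with h
  · simp [h3.2 h]
  · have h4 : eQ ((k : ℚ) / m) - 1 ≠ 0 := sub_ne_zero.2 (mt h3.1 h)
    have := mul_geom_sum (eQ ((k : ℚ) / m)) m
    rw [h2, sub_self] at this
    exact (mul_eq_zero.1 this).resolve_left h4

lemma sum_moebius_divisors (m : ℕ) :
    ∑ t ∈ m.divisors, (ArithmeticFunction.moebius t : ℂ) = if m = 1 then 1 else 0 := by
  have h := ArithmeticFunction.coe_mul_zeta_apply (f := ArithmeticFunction.moebius) (x := m)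
  rw [ArithmeticFunction.moebius_mul_coe_zeta, ArithmeticFunction.one_apply] at h
  rw [← Int.cast_sum, ← h]
  split_ifs <;> simp

lemma sum_range_dvd (t m : ℕ) (ht : 0 < t) (f : ℕ → ℂ) :
    ∑ b ∈ (Finset.range (t * m)).filter (fun b => t ∣ b), f b =
      ∑ j ∈ Finset.range m, f (t * j) := by
  symm
  refine Finset.sum_bij (fun j _ => t * j) ?_ ?_ ?_ ?_
  · intro j hj
    simp only [Finset.mem_filter, Finset.mem_range] at hj ⊢
    exact ⟨Nat.mul_lt_mul_of_pos_left hj ht, dvd_mul_right _ _⟩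
  · intro i _ j _ h
    exact Nat.eq_of_mul_eq_mul_left ht h
  · intro b hb
    simp only [Finset.mem_filter, Finset.mem_range] at hb
    obtain ⟨hb, j, rfl⟩ := hb
    exact ⟨j, Finset.mem_range.2 (lt_of_mul_lt_mul_left' hb), rfl⟩
  · intros
    rfl

/-- A Ramanujan-type sum in which coprimality is required only to a divisor `g` of the modulus:
Möbius inversion over `gcd(b, g)` reduces it to complete geometric sums. -/
lemma sum_eQ_coprime (d g : ℕ) (hd : 0 < d) (hg : g ∣ d) (k : ℤ) :
    ∑ b ∈ (Finset.range d).filter (fun b => Nat.gcd b g = 1), eQ ((k : ℚ) * b / d) =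
      ∑ t ∈ g.divisors.filter (fun t : ℕ => (d : ℤ) ∣ k * t),
        (ArithmeticFunction.moebius t : ℂ) * (d : ℂ) / (t : ℂ) := by
  have hg0 : g ≠ 0 := (Nat.pos_of_dvd_of_pos hg hd).ne'
  have hdiv : ∀ b, (Nat.gcd b g).divisors = g.divisors.filter (fun t => t ∣ b) := by
    intro b
    ext t
    simp [Nat.dvd_gcd_iff, hg0, and_comm]
  have h1 : ∀ b ∈ Finset.range d,
      (if Nat.gcd b g = 1 then eQ ((k : ℚ) * b / d) else 0) =
        ∑ t ∈ g.divisors, (ArithmeticFunction.moebius t : ℂ) *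
          (if t ∣ b then eQ ((k : ℚ) * b / d) else 0) := by
    intro b _
    have h := sum_moebius_divisors (Nat.gcd b g)
    rw [hdiv, Finset.sum_filter] at h
    have h' : (if Nat.gcd b g = 1 then eQ ((k : ℚ) * b / d) else 0) =
        (if Nat.gcd b g = 1 then 1 else 0) * eQ ((k : ℚ) * b / d) := by
      split_ifs <;> simp
    rw [h', ← h, Finset.sum_mul]
    refine Finset.sum_congr rfl fun t _ => ?_
    split_ifs <;> simp
  rw [Finset.sum_filter, Finset.sum_congr rfl h1, Finset.sum_comm, Finset.sum_filter]
  refine Finset.sum_congr rfl fun t ht => ?_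
  obtain ⟨m, hm⟩ := (Nat.dvd_of_mem_divisors ht).trans hg
  have ht0 : 0 < t := Nat.pos_of_mem_divisors ht
  have hm0 : 0 < m := Nat.pos_of_ne_zero (by rintro rfl; omega)
  have htC : (t : ℂ) ≠ 0 := by exact_mod_cast ht0.ne'
  have htQ : (t : ℚ) ≠ 0 := by exact_mod_cast ht0.ne'
  rw [← Finset.mul_sum, ← Finset.sum_filter, hm, sum_range_dvd t m ht0]
  have h2 : ∀ j ∈ Finset.range m,
      eQ ((k : ℚ) * ((t * j : ℕ) : ℚ) / ((t * m : ℕ) : ℚ)) = eQ ((k : ℚ) * j / m) := by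
    intro j _
    congr 1
    push_cast
    field_simp
  have h3 : ((t * m : ℕ) : ℤ) ∣ k * t ↔ (m : ℤ) ∣ k := by
    push_cast
    rw [mul_comm k]
    exact mul_dvd_mul_iff_left (by exact_mod_cast ht0.ne')
  rw [Finset.sum_congr rfl h2, sum_eQ_range m hm0]
  simp only [h3]
  split_ifs
  · push_cast
    field_simp
  · simp

/-! ### Divisibility -/

lemma div_gcd_dvd_iff (N : ℕ) (hN : 0 < N) (M : ℤ) (t : ℕ) :
    N / Int.gcd (N : ℤ) M ∣ t ↔ (N : ℤ) ∣ M * t := by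
  have hg : 0 < Int.gcd (N : ℤ) M := Int.gcd_pos_of_ne_zero_left _ (by omega)
  have h : Int.gcd (N : ℤ) M = Nat.gcd N M.natAbs := by simp [Int.gcd]
  rw [h] at hg ⊢
  rw [← Int.natAbs_dvd_natAbs, Int.natAbs_mul, Int.natAbs_natCast, Int.natAbs_natCast,
    ← Nat.dvd_gcd_mul_iff_dvd_mul, Nat.div_dvd_iff_dvd_mul (Nat.gcd_dvd_left _ _) hg]

lemma four_dvd (r : ℤ) (hr : Even r) (l d : ℕ) (hdvd : (24 : ℤ) ∣ r * ((l : ℤ) - 1))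
    (hd : d ∣ l) : (4 : ℤ) ∣ r * ((d : ℤ) - 1) := by
  obtain ⟨a, rfl⟩ := hd
  obtain ⟨s, rfl⟩ := hr
  rcases Nat.even_or_odd d with ⟨e, rfl⟩ | ⟨e, rfl⟩
  -- For even `d` the number `l - 1` is odd, so `4 ∣ r` already.
  · have hc : IsCoprime (4 : ℤ) (((((e + e) * a : ℕ)) : ℤ) - 1) :=
      ⟨(e * a) ^ 2, -(2 * e * a + 1), by push_cast; ring⟩
    exact (hc.dvd_of_dvd_mul_right ((show (4 : ℤ) ∣ 24 by norm_num).trans hdvd)).mul_right _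
  · exact ⟨s * e, by push_cast; ring⟩

/-- If `8 ∤ r` then `l`, hence `d`, is odd, and if `3 ∤ r` then `l`, hence `d`, is prime to `3`;
so each of `8` and `3` divides `r` or `d² - 1`. -/
lemma dvd_mul_sq_sub_one (r : ℤ) (l d : ℕ)
    (hdvd : (24 : ℤ) ∣ r * ((l : ℤ) - 1)) (hd : d ∣ l) :
    (24 : ℤ) ∣ r * ((d : ℤ) ^ 2 - 1) := by
  obtain ⟨a, rfl⟩ := hd
  have h8 : (8 : ℤ) ∣ r * ((d : ℤ) ^ 2 - 1) := by
    rcases Nat.even_or_odd d with ⟨e, rfl⟩ | ⟨e, rfl⟩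
    · have hc : IsCoprime (8 : ℤ) (((((e + e) * a : ℕ)) : ℤ) - 1) :=
        ⟨(e * a) ^ 3, -((2 * e * a) ^ 2 + 2 * e * a + 1), by push_cast; ring⟩
      exact (hc.dvd_of_dvd_mul_right ((show (8 : ℤ) ∣ 24 by norm_num).trans hdvd)).mul_right _
    · refine Dvd.dvd.mul_left ?_ _
      exact Int.eight_dvd_sq_sub_one_of_odd ⟨e, by push_cast; ring⟩
  have h3 : (3 : ℤ) ∣ r * ((d : ℤ) ^ 2 - 1) := by
    have hp : Prime (3 : ℤ) := Int.prime_three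
    rcases hp.dvd_or_dvd ((show (3 : ℤ) ∣ 24 by norm_num).trans hdvd) with h | h
    · exact h.mul_right _
    · refine Dvd.dvd.mul_left ?_ _
      have h0 : ¬ (3 : ℤ) ∣ d := by
        intro h'
        have h2 : (3 : ℤ) ∣ ((d * a : ℕ) : ℤ) := by
          push_cast
          exact h'.mul_right _
        omega
      have h1 : (d : ℤ) % 3 = 1 ∨ (d : ℤ) % 3 = 2 := by omega
      rw [Int.dvd_iff_emod_eq_zero, Int.sub_emod, pow_two, Int.mul_emod]
      rcases h1 with h1 | h1 <;> rw [h1] <;> rfl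
  have hc : IsCoprime (8 : ℤ) 3 := ⟨-1, 3, by norm_num⟩
  exact hc.mul_dvd h8 h3

/-- Since `P` vanishes off `ℕ`, a nonzero coefficient forces `n = a² (r + 24 m)`; then
`n - r (a d)² = a² (24 m - r (d² - 1))` and `24 ∣ r (d² - 1)`. -/
lemma exists_eq_of_coeff_ne_zero (r : ℤ) (a d : ℕ) (ha : 0 < a)
    (hdvd : (24 : ℤ) ∣ r * (((a * d : ℕ) : ℤ) - 1)) (n : ℤ) (P : ℚ → ℂ)
    (hP : IsEtaPowerCoeffs r P) (hne : P (((n : ℚ) / (a : ℚ) ^ 2 - (r : ℚ)) / 24) ≠ 0) :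
    ∃ k : ℤ, n - r * ((a * d : ℕ) : ℤ) ^ 2 = 24 * (a : ℤ) ^ 2 * k := by
  obtain ⟨m, hm⟩ := not_not.1 (mt (hP.1 _) hne)
  obtain ⟨c, hc⟩ := dvd_mul_sq_sub_one r (a * d) d hdvd (dvd_mul_left _ _)
  have haQ : (a : ℚ) ≠ 0 := by positivity
  have hn : n = (a : ℤ) ^ 2 * (r + 24 * m) := by
    have : (n : ℚ) = (a : ℚ) ^ 2 * (r + 24 * m) := by
      field_simp at hm
      linarith
    exact_mod_cast this
  refine ⟨m - c, ?_⟩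
  rw [hn]
  push_cast
  linear_combination (-(a : ℤ) ^ 2) * hc

/-! ### The inner sum and the coefficient formula -/

/-- The inner exponential sum for `l = a d`, with `M` standing for `n - r l²`. -/
lemma inner_sum_eq (a d : ℕ) (ha : 0 < a) (hd : 0 < d) (M k : ℤ)
    (hM : M = 24 * (a : ℤ) ^ 2 * k) :
    ∑ b ∈ (Finset.range d).filter (fun b => Nat.gcd b (Nat.gcd a d) = 1),
        eQ (((M * b : ℤ) : ℚ) / ((24 : ℚ) * a * ((a * d : ℕ) : ℚ))) =
      ∑ t ∈ ((Nat.gcd a d).divisors).filter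
          (fun t => (24 * a * (a * d)) / Int.gcd ((24 * a * (a * d) : ℕ) : ℤ) M ∣ t),
        (ArithmeticFunction.moebius t : ℂ) * (d : ℂ) / (t : ℂ) := by
  have haQ : (a : ℚ) ≠ 0 := by positivity
  have hdQ : (d : ℚ) ≠ 0 := by positivity
  have h1 : ∀ b : ℕ, ((M * b : ℤ) : ℚ) / ((24 : ℚ) * a * ((a * d : ℕ) : ℚ)) =
      (k : ℚ) * b / d := by
    intro b
    rw [hM]
    push_cast
    field_simp
  have h2 : ∀ t : ℕ, (24 * a * (a * d)) / Int.gcd ((24 * a * (a * d) : ℕ) : ℤ) M ∣ t ↔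
      (d : ℤ) ∣ k * t := by
    intro t
    rw [div_gcd_dvd_iff _ (by positivity), hM]
    have h3 : ((24 * a * (a * d) : ℕ) : ℤ) = (24 * (a : ℤ) ^ 2) * d := by
      push_cast
      ring
    rw [h3, mul_assoc _ k]
    exact mul_dvd_mul_iff_left (by positivity)
  simp only [h1, h2]
  exact sum_eQ_coprime d _ hd (Nat.gcd_dvd_right _ _) k

end Paper

/-!
STATEMENT 17: Let r be an even integer and l a positive integer with 24 | r(l−1), and
let n be an integer.  With d = l/a: (i) r(d−1)/4 ∈ ℤ for every positive divisor a of l;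
(ii) the Fourier coefficient sum
  ∑_{0<a|l} a^{r/2} e(−r(d−1)/8) ∑_{0≤b<d, gcd(b,a,d)=1} e((n−rl²)b/(24al)) P_r((n/a²−r)/24)
equals
  ∑_{0<a|l} a^{r/2} (−1)^{r(d−1)/4} ∑_t μ(t)(d/t) P_r((n/a²−r)/24),
t ranging over positive divisors of gcd(a,d) divisible by 24al/gcd(24al, n−rl²);
(iii) if l is squarefree this common value is
  l·∑_{0<a|l, 24al | n−rl²} a^{r/2−1} (−1)^{r(d−1)/4} P_r((n/a²−r)/24).
-/

open Paper in
theorem fourier_coefficient_Tl_eta_even (r : ℤ) (hr : Even r) (l : ℕ) (hl : 0 < l)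
    (hdvd : (24 : ℤ) ∣ r * ((l : ℤ) - 1)) (n : ℤ)
    (P : ℚ → ℂ) (hP : IsEtaPowerCoeffs r P) :
    -- (i)
    (∀ a ∈ l.divisors, (4 : ℤ) ∣ r * (((l / a : ℕ) : ℤ) - 1)) ∧
    -- (ii)
    (∑ a ∈ l.divisors,
        (a : ℂ) ^ (r / 2 : ℤ) *
          eQ (((-(r * (((l / a : ℕ) : ℤ) - 1)) : ℤ) : ℚ) / 8) *
          (∑ b ∈ (Finset.range (l / a)).filter
              (fun b => Nat.gcd b (Nat.gcd a (l / a)) = 1),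
            eQ ((((n - r * (l : ℤ) ^ 2) * b : ℤ) : ℚ) / ((24 : ℚ) * a * l))) *
          P (((n : ℚ) / (a : ℚ) ^ 2 - (r : ℚ)) / 24) =
      ∑ a ∈ l.divisors,
        (a : ℂ) ^ (r / 2 : ℤ) * (-1 : ℂ) ^ (r * (((l / a : ℕ) : ℤ) - 1) / 4) *
          ∑ t ∈ ((Nat.gcd a (l / a)).divisors).filter
              (fun t => (24 * a * l) / Int.gcd ((24 * a * l : ℕ) : ℤ) (n - r * (l : ℤ) ^ 2) ∣ t),
            (ArithmeticFunction.moebius t : ℂ) * ((l / a : ℕ) : ℂ) / (t : ℂ) *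
              P (((n : ℚ) / (a : ℚ) ^ 2 - (r : ℚ)) / 24)) ∧
    -- (iii)
    (Squarefree l →
      ∑ a ∈ l.divisors,
        (a : ℂ) ^ (r / 2 : ℤ) *
          eQ (((-(r * (((l / a : ℕ) : ℤ) - 1)) : ℤ) : ℚ) / 8) *
          (∑ b ∈ (Finset.range (l / a)).filter
              (fun b => Nat.gcd b (Nat.gcd a (l / a)) = 1),
            eQ ((((n - r * (l : ℤ) ^ 2) * b : ℤ) : ℚ) / ((24 : ℚ) * a * l))) *
          P (((n : ℚ) / (a : ℚ) ^ 2 - (r : ℚ)) / 24) =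
      (l : ℂ) * ∑ a ∈ l.divisors.filter
            (fun a => ((24 * a * l : ℕ) : ℤ) ∣ (n - r * (l : ℤ) ^ 2)),
          (a : ℂ) ^ (r / 2 - 1 : ℤ) * (-1 : ℂ) ^ (r * (((l / a : ℕ) : ℤ) - 1) / 4) *
            P (((n : ℚ) / (a : ℚ) ^ 2 - (r : ℚ)) / 24)) := by
  have hi : ∀ a ∈ l.divisors, (4 : ℤ) ∣ r * (((l / a : ℕ) : ℤ) - 1) := fun a ha =>
    four_dvd r hr l (l / a) hdvd (Nat.div_dvd_of_dvd (Nat.dvd_of_mem_divisors ha))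
  -- Part (iii) is deduced from (ii), so (ii) is made available while proving it.
  refine ⟨hi, (fun h1 h2 => ⟨h1, h2 h1⟩ : ∀ {p q : Prop}, p → (p → q) → p ∧ q) ?_
    (fun hii hsq => hii.trans ?_)⟩
  rotate_left
  · rw [Finset.mul_sum, Finset.sum_filter]
    refine Finset.sum_congr rfl fun a ha => ?_
    obtain ⟨d, rfl⟩ := Nat.dvd_of_mem_divisors ha
    have ha0 : 0 < a := Nat.pos_of_mem_divisors ha
    have haC : (a : ℂ) ≠ 0 := by exact_mod_cast ha0.ne'
    have hcop : Nat.gcd a d = 1 := Nat.coprime_of_squarefree_mul hsq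
    rw [Nat.mul_div_cancel_left d ha0, hcop, Nat.divisors_one, Finset.filter_singleton]
    simp only [div_gcd_dvd_iff (24 * a * (a * d)) (by positivity), Nat.cast_one, mul_one]
    split_ifs
    · rw [Finset.sum_singleton, zpow_sub_one₀ haC]
      simp only [ArithmeticFunction.moebius_apply_one]
      push_cast
      field_simp
    · simp
  · refine Finset.sum_congr rfl fun a ha => ?_
    rw [← Finset.sum_mul, ← mul_assoc]
    -- A vanishing coefficient kills both sides whatever the two inner sums are.
    by_cases hne : P (((n : ℚ) / (a : ℚ) ^ 2 - (r : ℚ)) / 24) = 0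
    · rw [hne, mul_zero, mul_zero]
    obtain ⟨c, hc⟩ := hi a ha
    obtain ⟨d, rfl⟩ := Nat.dvd_of_mem_divisors ha
    have ha0 : 0 < a := Nat.pos_of_mem_divisors ha
    obtain ⟨k, hk⟩ := exists_eq_of_coeff_ne_zero r a d ha0 hdvd n P hP hne
    rw [hc, Nat.mul_div_cancel_left d ha0,
      inner_sum_eq a d ha0 (Nat.pos_of_mul_pos_left hl) _ k hk,
      Int.mul_ediv_cancel_left _ (by norm_num), ← eQ_neg_half]
    congr 4
    push_cast
    ring
end
end
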